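/- For real numbers α and β, the sequence (k² + αk + β)_{k=0}^∞ is a Legendre multiplier sequence if and only if α = 1 and 0 ≤ β ≤ 1. -/

import Mathlib

open Polynomial

/-- A real polynomial is *hyperbolic* if all of its complex roots are real
(the zero polynomial and nonzero constants are vacuously hyperbolic). -/
def Hyperbolic (p : Polynomial ℝ) : Prop :=
  ∀ z ∈ (p.map (algebraMap ℝ ℂ)).roots, z.im = 0

/-- `γ` is a multiplier sequence for the simple set `q`: the linear operator
sending `q k` to `γ k • q k` maps hyperbolic polynomials to hyperbolic
polynomials.  (Since `q` is a simple set, every real polynomial has a unique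
expansion `∑ a k • q k`, so this quantification over coefficient families
expresses exactly that property.) -/
def IsMultiplierSeqFor (q : ℕ → Polynomial ℝ) (γ : ℕ → ℝ) : Prop :=
  ∀ (n : ℕ) (a : ℕ → ℝ),
    Hyperbolic (∑ k ∈ Finset.range n, C (a k) * q k) →
    Hyperbolic (∑ k ∈ Finset.range n, C (γ k * a k) * q k)

/-- The Legendre polynomials, via Rodrigues' formula
`Le n = (1/(2^n n!)) Dⁿ[(x²-1)ⁿ]`. -/
noncomputable def legendre (n : ℕ) : Polynomial ℝ :=
  C (1 / (2 ^ n * n.factorial : ℝ)) * derivative^[n] ((X ^ 2 - 1) ^ n)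

/-- A Legendre multiplier sequence. -/
def IsLegendreMS (γ : ℕ → ℝ) : Prop := IsMultiplierSeqFor legendre γ

/-!
By Legendre's differential equation, `k² + k + β` is the eigenvalue on `Le_k` of the operator
`T_β p = ((x² - 1) p')' + β p`.

Let `0 ≤ β ≤ 1`, let `p` have only real roots `r`, and let `Im z > 0`. Put `a = -∑ 1 / (z - r)`,
`S = ∑ 1 / (z - r)²`, `G = -1 / (z - 1)` and `H = -1 / (z + 1)`; then `a`, `G` and `H` lie in the
upper half-plane. If `T_β p` vanished at `z`, completing the square would give
`(a + (G + H) / 2)² = S + (1 - β) ((G + H) / 2)² + β ((G - H) / 2)²`. As `‖w²‖ - Re w²` equals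
`2 (Im w)²`, subadditivity of `w ↦ ‖w‖ - Re w` contradicts this identity.

Conversely, Laguerre's inequality `p'² - p p'' ≥ 0` at `0`, applied to the image of `x⁶`, forces
`α = 1`. The images of `x² - c²` and `x (x² - 4)` then give `β ≥ 0`, and those of `(x + c) ^ N` with
`c` and `N` large give `β ≤ 1`.
-/

/-! ### Hyperbolic polynomials -/

lemma hyperbolic_iff_splits {p : ℝ[X]} : Hyperbolic p ↔ p.Splits := by
  refine ⟨fun hp ↦ ?_, fun hp z hz ↦ ?_⟩
  · refine Splits.of_splits_map (algebraMap ℝ ℂ) (IsAlgClosed.splits _) fun z hz ↦ ?_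
    exact ⟨z.re, Complex.ext rfl (hp z hz).symm⟩
  · rw [hp.roots_map] at hz
    obtain ⟨r, -, rfl⟩ := Multiset.mem_map.1 hz
    exact Complex.ofReal_im r

lemma Hyperbolic.of_dvd {p q : ℝ[X]} (hq : Hyperbolic q) (hpq : p ∣ q) (hq0 : q ≠ 0) :
    Hyperbolic p :=
  hyperbolic_iff_splits.2 ((hyperbolic_iff_splits.1 hq).of_dvd hq0 hpq)

lemma hyperbolic_of_forall_im_pos {p : ℝ[X]} (h : ∀ z : ℂ, 0 < z.im → aeval z p ≠ 0) :
    Hyperbolic p := by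
  intro z hz
  have hroot : aeval z p = 0 := by
    simpa only [eval_map_algebraMap] using (isRoot_of_mem_roots hz).eq_zero
  rcases lt_trichotomy z.im 0 with him | him | him
  · refine absurd ?_ (h (starRingEnd ℂ z) (by simpa using him))
    rw [aeval_conj, hroot, map_zero]
  · exact him
  · exact absurd hroot (h z him)

/-- The Laguerre expression `p'² - p p''`, nonnegative on `ℝ` when `p` is hyperbolic. -/
noncomputable def laguerreExpr {R : Type*} [CommRing R] (p : R[X]) : R[X] :=
  derivative p ^ 2 - p * derivative (derivative p)

lemma laguerreExpr_mul {R : Type*} [CommRing R] (p q : R[X]) :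
    laguerreExpr (p * q) = p ^ 2 * laguerreExpr q + q ^ 2 * laguerreExpr p := by
  simp only [laguerreExpr, derivative_mul, derivative_add]
  ring

lemma eval_laguerreExpr_of_splits {K : Type*} [Field K] {f : K[X]} (hf : f.Splits) {x : K}
    (hx : f.eval x ≠ 0) :
    (laguerreExpr f).eval x = f.eval x ^ 2 * (f.roots.map fun r ↦ 1 / (x - r) ^ 2).sum := by
  induction hf using Submonoid.closure_induction with
  | mem p hp =>
    obtain ⟨a, rfl⟩ | ⟨a, rfl⟩ := hp
    · simp [laguerreExpr]
    · have hxa : x + a ≠ 0 := by simpa using hx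
      simp [laguerreExpr, hxa]
  | one => simp [laguerreExpr]
  | mul p q _ _ hp hq =>
    rw [eval_mul] at hx
    have hpq : p * q ≠ 0 := fun h ↦ hx (by rw [← eval_mul, h, eval_zero])
    rw [laguerreExpr_mul, roots_mul hpq, Multiset.map_add, Multiset.sum_add, eval_add, eval_mul,
      eval_mul, eval_pow, eval_pow, eval_mul, hp (left_ne_zero_of_mul hx),
      hq (right_ne_zero_of_mul hx)]
    ring

lemma Hyperbolic.eval_laguerreExpr_nonneg {p : ℝ[X]} (hp : Hyperbolic p) (x : ℝ) :
    0 ≤ (laguerreExpr p).eval x := by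
  by_cases hx : p.eval x = 0
  · simpa [laguerreExpr, hx] using sq_nonneg _
  · rw [eval_laguerreExpr_of_splits (hyperbolic_iff_splits.1 hp) hx]
    refine mul_nonneg (sq_nonneg _) (Multiset.sum_nonneg fun y hy ↦ ?_)
    obtain ⟨r, -, rfl⟩ := Multiset.mem_map.1 hy
    positivity

lemma Hyperbolic.two_mul_coeff_zero_mul_coeff_two_le {p : ℝ[X]} (hp : Hyperbolic p) :
    2 * (p.coeff 0 * p.coeff 2) ≤ p.coeff 1 ^ 2 := by
  have h := hp.eval_laguerreExpr_nonneg 0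
  simp only [laguerreExpr, eval_sub, eval_pow, eval_mul, ← coeff_zero_eq_eval_zero,
    coeff_derivative] at h
  norm_num at h
  linarith

lemma Hyperbolic.discrim_nonneg {a b c : ℝ} (h : Hyperbolic (C a * X ^ 2 + C b * X + C c)) :
    0 ≤ discrim a b c := by
  rcases eq_or_ne a 0 with rfl | ha
  · simpa [discrim] using sq_nonneg b
  · have hvertex := h.eval_laguerreExpr_nonneg (-b / (2 * a))
    have heval : (laguerreExpr (C a * X ^ 2 + C b * X + C c)).eval (-b / (2 * a)) =
        discrim a b c / 2 := by
      simp only [laguerreExpr, discrim, derivative_add, derivative_C_mul, derivative_X_sq,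
        derivative_X, derivative_C, mul_one, add_zero, eval_sub, eval_pow, eval_add, eval_mul,
        eval_C, eval_X]
      field_simp
      ring
    linarith

/-- The linear operator `T` maps hyperbolic polynomials to hyperbolic polynomials. -/
def PreservesHyperbolicity (T : ℝ[X] →ₗ[ℝ] ℝ[X]) : Prop :=
  ∀ p, Hyperbolic p → Hyperbolic (T p)

/-! ### Zero-free upper half-plane -/

/-- The quantity `‖z‖ - Re z`, a subadditive and positively homogeneous function of `z` which
equals `2 (Im w)²` when `z = w²`. -/
noncomputable def normSubRe (z : ℂ) : ℝ := ‖z‖ - z.re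

lemma normSubRe_sq (w : ℂ) : normSubRe (w ^ 2) = 2 * w.im ^ 2 := by
  rw [normSubRe, norm_pow, Complex.sq_norm, Complex.normSq_apply, pow_two w, Complex.mul_re]
  ring

lemma normSubRe_add_le (z w : ℂ) : normSubRe (z + w) ≤ normSubRe z + normSubRe w := by
  simp only [normSubRe, Complex.add_re]
  linarith [norm_add_le z w]

lemma normSubRe_ofReal_mul {t : ℝ} (ht : 0 ≤ t) (z : ℂ) :
    normSubRe (t * z) = t * normSubRe z := by
  rw [normSubRe, normSubRe, norm_mul, Complex.norm_of_nonneg ht, Complex.re_ofReal_mul, mul_sub]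

lemma normSubRe_sum_sq_le {u : Multiset ℂ} (hu : ∀ w ∈ u, 0 ≤ w.im) :
    normSubRe (u.map (· ^ 2)).sum ≤ 2 * u.sum.im ^ 2 := by
  induction u using Multiset.induction with
  | empty => simp [normSubRe]
  | cons w u ih =>
    obtain ⟨hw, hu⟩ := Multiset.forall_mem_cons.1 hu
    have hsum : 0 ≤ u.sum.im :=
      Multiset.sum_induction (0 ≤ Complex.im ·) u
        (fun x y hx hy ↦ (Complex.add_im x y).symm ▸ add_nonneg hx hy) le_rfl hu
    rw [Multiset.map_cons, Multiset.sum_cons, Multiset.sum_cons, Complex.add_im]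
    calc normSubRe (w ^ 2 + (u.map (· ^ 2)).sum)
        ≤ 2 * w.im ^ 2 + 2 * u.sum.im ^ 2 :=
          (normSubRe_add_le _ _).trans (add_le_add (normSubRe_sq w).le (ih hu))
      _ ≤ 2 * (w.im + u.sum.im) ^ 2 := by nlinarith [mul_nonneg hw hsum]

lemma im_neg_one_div_pos {w : ℂ} (hw : 0 < w.im) : 0 < (-(1 / w)).im := by
  have hw0 : w ≠ 0 := by
    rintro rfl
    exact lt_irrefl _ hw
  rw [one_div, Complex.neg_im, Complex.inv_im, neg_div, neg_neg]
  exact div_pos hw (Complex.normSq_pos.2 hw0)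

-- `a` and `S` are the sums of `-1 / (z - r)` and of `1 / (z - r) ^ 2` over the roots `r`.
lemma exists_eval_derivative_eq_of_roots_im_lt {q : ℂ[X]} {z : ℂ} (hq : q.natDegree ≠ 0)
    (hz : ∀ r ∈ q.roots, r.im < z.im) :
    ∃ a S : ℂ, 0 < a.im ∧ normSubRe S ≤ 2 * a.im ^ 2 ∧ q.eval z ≠ 0 ∧
      (derivative q).eval z = -a * q.eval z ∧
      (derivative (derivative q)).eval z = (a ^ 2 - S) * q.eval z := by
  have hsplits : q.Splits := IsAlgClosed.splits q
  have hqz : q.eval z ≠ 0 := fun h ↦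
    lt_irrefl _ (hz z ((mem_roots (ne_zero_of_natDegree_gt (Nat.pos_of_ne_zero hq))).2 h))
  set u : Multiset ℂ := q.roots.map fun r ↦ -(1 / (z - r)) with hu
  have hu_im : ∀ w ∈ u, 0 < w.im := by
    intro w hw
    obtain ⟨r, hr, rfl⟩ := Multiset.mem_map.1 hw
    exact im_neg_one_div_pos (by simpa using hz r hr)
  have hd1 : (derivative q).eval z = -u.sum * q.eval z := by
    rw [hsplits.eval_derivative_eq_eval_mul_sum hqz, hu, Multiset.sum_map_neg, neg_neg, mul_comm]
  have hd2 : (derivative (derivative q)).eval z =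
      (u.sum ^ 2 - (u.map (· ^ 2)).sum) * q.eval z := by
    have hsq : (u.map (· ^ 2)).sum = (q.roots.map fun r ↦ 1 / (z - r) ^ 2).sum := by
      simp only [hu, Multiset.map_map, Function.comp_def, neg_sq, one_div, inv_pow]
    have h := eval_laguerreExpr_of_splits hsplits hqz
    rw [laguerreExpr, eval_sub, eval_pow, eval_mul, hd1, ← hsq] at h
    exact mul_left_cancel₀ hqz (by linear_combination -h)
  have hu_sum : 0 < u.sum.im := by
    have hu0 : u ≠ 0 := by simpa [hu] using hsplits.roots_ne_zero hq
    exact Multiset.sum_induction_nonempty (0 < Complex.im ·)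
      (fun x y hx hy ↦ (Complex.add_im x y).symm ▸ add_pos hx hy) hu0 hu_im
  exact ⟨u.sum, (u.map (· ^ 2)).sum, hu_sum, normSubRe_sum_sq_le fun w hw ↦ (hu_im w hw).le,
    hqz, hd1, hd2⟩

-- Completing the square writes `(a + (G + H) / 2) ^ 2` as `S` plus a nonnegative combination of
-- squares; comparing `normSubRe` of both sides bounds `(Im (a + (G + H) / 2)) ^ 2` too tightly.
lemma sq_sub_add_mul_add_ne_zero {β : ℝ} (hβ0 : 0 ≤ β) (hβ1 : β ≤ 1) {a S G H : ℂ}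
    (ha : 0 < a.im) (hG : 0 < G.im) (hH : 0 < H.im) (hS : normSubRe S ≤ 2 * a.im ^ 2) :
    a ^ 2 - S + a * (G + H) + β * (G * H) ≠ 0 := by
  intro h
  have hsq : (a + (G + H) / 2) ^ 2 =
      S + (1 - β : ℝ) * ((G + H) / 2) ^ 2 + β * ((G - H) / 2) ^ 2 := by
    push_cast
    linear_combination h
  have hle : 2 * (a + (G + H) / 2).im ^ 2 ≤
      2 * a.im ^ 2 + (1 - β) * (2 * ((G + H) / 2).im ^ 2) + β * (2 * ((G - H) / 2).im ^ 2) := by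
    have hβ1' : 0 ≤ 1 - β := sub_nonneg.2 hβ1
    rw [← normSubRe_sq (_ + _), ← normSubRe_sq (_ / _), ← normSubRe_sq ((G - H) / 2), hsq,
      ← normSubRe_ofReal_mul hβ0, ← normSubRe_ofReal_mul hβ1']
    grw [normSubRe_add_le, normSubRe_add_le, hS]
  simp only [Complex.add_im, Complex.sub_im, Complex.div_ofNat_im] at hle
  nlinarith [mul_pos ha (add_pos hG hH), mul_nonneg hβ0 (mul_pos hG hH).le]

/-! ### The Legendre differential operator -/

/-- The operator `p ↦ ((x² - 1) p')' + β p`, for which `Le_k` is an eigenvector with eigenvalue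
`k² + k + β`. -/
noncomputable def legendreOperator (β : ℝ) : ℝ[X] →ₗ[ℝ] ℝ[X] :=
  derivative ∘ₗ LinearMap.mulLeft ℝ (X ^ 2 - 1) ∘ₗ derivative + β • LinearMap.id

lemma legendreOperator_apply (β : ℝ) (p : ℝ[X]) :
    legendreOperator β p =
      (X ^ 2 - 1) * derivative (derivative p) + 2 * X * derivative p + C β * p := by
  simp only [legendreOperator, LinearMap.add_apply, LinearMap.comp_apply, LinearMap.mulLeft_apply,
    LinearMap.smul_apply, LinearMap.id_apply, derivative_mul, derivative_sub, derivative_X_sq,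
    derivative_one, C_ofNat, smul_eq_C_mul]
  ring

lemma aeval_legendreOperator_ne_zero {β : ℝ} (hβ0 : 0 ≤ β) (hβ1 : β ≤ 1) {p : ℝ[X]}
    (hp : Hyperbolic p) (hdeg : p.natDegree ≠ 0) {z : ℂ} (hz : 0 < z.im) :
    aeval z (legendreOperator β p) ≠ 0 := by
  obtain ⟨a, S, ha, hS, hpz, hd1, hd2⟩ :=
    exists_eval_derivative_eq_of_roots_im_lt (q := p.map (algebraMap ℝ ℂ)) (z := z)
      (by rwa [natDegree_map]) fun r hr ↦ (hp r hr).trans_lt hz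
  simp only [derivative_map, eval_map_algebraMap] at hpz hd1 hd2
  have hG : 0 < (-(1 / (z - 1))).im := im_neg_one_div_pos (by simpa using hz)
  have hH : 0 < (-(1 / (z + 1))).im := im_neg_one_div_pos (by simpa using hz)
  have hsub : z - 1 ≠ 0 := fun h ↦ by simp [h] at hG
  have hadd : z + 1 ≠ 0 := fun h ↦ by simp [h] at hH
  have hfactor : aeval z (legendreOperator β p) = aeval z p * ((z - 1) * (z + 1)) *
      (a ^ 2 - S + a * (-(1 / (z - 1)) + -(1 / (z + 1))) +
        β * (-(1 / (z - 1)) * -(1 / (z + 1)))) := by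
    simp only [legendreOperator_apply, map_add, map_sub, map_mul, map_pow, map_one, map_ofNat,
      aeval_X, aeval_C, hd1, hd2, Complex.coe_algebraMap]
    field_simp
    ring
  rw [hfactor]
  exact mul_ne_zero (mul_ne_zero hpz (mul_ne_zero hsub hadd))
    (sq_sub_add_mul_add_ne_zero hβ0 hβ1 ha hG hH hS)

lemma preservesHyperbolicity_legendreOperator {β : ℝ} (hβ0 : 0 ≤ β) (hβ1 : β ≤ 1) :
    PreservesHyperbolicity (legendreOperator β) := by
  intro p hp
  by_cases hdeg : p.natDegree = 0
  · rw [eq_C_of_natDegree_eq_zero hdeg, legendreOperator_apply, derivative_C, derivative_zero,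
      mul_zero, mul_zero, zero_add, zero_add]
    exact hyperbolic_iff_splits.2 ((Splits.C _).mul (Splits.C _))
  · exact hyperbolic_of_forall_im_pos fun z hz ↦
      aeval_legendreOperator_ne_zero hβ0 hβ1 hp hdeg hz

/-! ### Legendre polynomials -/

-- For `f = (X ^ 2 - 1) ^ a`: the conclusion is the hypothesis differentiated `m + 1` times.
lemma iterate_derivative_of_X_sq_sub_one_mul_derivative {R : Type*} [CommRing R] {f : R[X]}
    {a : R} (hf : (X ^ 2 - 1) * derivative f = 2 * C a * X * f) (m : ℕ) :
    (X ^ 2 - 1) * derivative^[m + 2] f + 2 * ((m : R[X]) + 1 - C a) * X * derivative^[m + 1] f +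
      ((m : R[X]) + 1) * ((m : R[X]) - 2 * C a) * derivative^[m] f = 0 := by
  induction m with
  | zero =>
    have h := congrArg derivative hf
    simp only [derivative_mul, derivative_sub, derivative_X_sq, derivative_one, derivative_X,
      derivative_C, derivative_ofNat, C_ofNat] at h
    simp only [Function.iterate_succ_apply, Function.iterate_zero_apply, Nat.cast_zero]
    linear_combination h
  | succ m ih =>
    have h := congrArg derivative ih
    simp only [derivative_add, derivative_mul, derivative_sub, derivative_X, derivative_natCast,
      derivative_one, derivative_X_sq, derivative_ofNat, derivative_zero, derivative_C, C_ofNat,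
      ← Function.iterate_succ_apply' derivative, Nat.succ_eq_add_one] at h
    push_cast
    linear_combination h

lemma X_sq_sub_one_mul_derivative_pow {R : Type*} [CommRing R] (n : ℕ) :
    (X ^ 2 - 1) * derivative ((X ^ 2 - 1 : R[X]) ^ n) =
      2 * C (n : R) * X * (X ^ 2 - 1) ^ n := by
  cases n with
  | zero => simp
  | succ n =>
    simp only [derivative_pow_succ, derivative_sub, derivative_X, derivative_one, Nat.cast_add,
      Nat.cast_one, C_add, C_1]
    ring

lemma legendreOperator_legendre (β : ℝ) (n : ℕ) :
    legendreOperator β (legendre n) = ((n : ℝ) ^ 2 + n + β) • legendre n := by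
  have h := iterate_derivative_of_X_sq_sub_one_mul_derivative
    (X_sq_sub_one_mul_derivative_pow (R := ℝ) n) n
  rw [Function.iterate_succ_apply', Function.iterate_succ_apply'] at h
  simp only [legendreOperator_apply, legendre, derivative_C_mul, smul_eq_C_mul, C_add, C_pow,
    map_natCast] at h ⊢
  linear_combination C (1 / (2 ^ n * n.factorial : ℝ)) * h

lemma natDegree_iterate_derivative_eq {R : Type*} [Semiring R] [IsAddTorsionFree R] (p : R[X])
    (k : ℕ) : (derivative^[k] p).natDegree = p.natDegree - k := by
  induction k with
  | zero => rfl
  | succ k ih => rw [Function.iterate_succ_apply', natDegree_derivative, ih, Nat.sub_sub]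

lemma degree_legendre (n : ℕ) : (legendre n).degree = n := by
  have hnat : (legendre n).natDegree = n := by
    have hbase : (X ^ 2 - 1 : ℝ[X]).natDegree = 2 := natDegree_X_pow_sub_C (r := (1 : ℝ))
    rw [legendre, natDegree_C_mul (by positivity), natDegree_iterate_derivative_eq, natDegree_pow,
      hbase]
    omega
  rcases n.eq_zero_or_pos with rfl | hn
  · simp [legendre]
  · rwa [degree_eq_iff_natDegree_eq_of_pos hn]

/-- The Legendre polynomials as a simple set. -/
noncomputable def legendreSequence : Polynomial.Sequence ℝ where
  elems' := legendre
  degree_eq' := degree_legendre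

lemma legendre_eq_sum (n : ℕ) :
    legendre n = C (1 / (2 ^ n * n.factorial : ℝ)) * ∑ m ∈ Finset.range (n + 1),
      C ((-1) ^ (n - m) * n.choose m * (2 * m).descFactorial n : ℝ) * X ^ (2 * m - n) := by
  rw [legendre, sub_eq_add_neg, add_pow, iterate_derivative_sum]
  refine congrArg _ (Finset.sum_congr rfl fun m _ ↦ ?_)
  have hterm : ((X : ℝ[X]) ^ 2) ^ m * (-1) ^ (n - m) * (n.choose m : ℝ[X]) =
      C ((-1) ^ (n - m) * n.choose m : ℝ) * X ^ (2 * m) := by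
    simp only [map_mul, map_pow, map_neg, map_one, map_natCast]
    ring
  rw [hterm, iterate_derivative_C_mul, iterate_derivative_X_pow_eq_C_mul, ← mul_assoc, ← C_mul]

lemma legendre_zero : legendre 0 = 1 := by
  simp [legendre]

lemma legendre_two : legendre 2 = C (3 / 2) * X ^ 2 - C (1 / 2) := by
  refine Polynomial.funext fun x ↦ ?_
  simp [legendre_eq_sum, Finset.sum_range_succ, Nat.factorial, Nat.choose, Nat.descFactorial]
  ring

lemma legendre_four : legendre 4 = C (35 / 8) * X ^ 4 - C (15 / 4) * X ^ 2 + C (3 / 8) := by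
  refine Polynomial.funext fun x ↦ ?_
  simp [legendre_eq_sum, Finset.sum_range_succ, Nat.factorial, Nat.choose, Nat.descFactorial]
  ring

lemma legendre_six : legendre 6 =
    C (231 / 16) * X ^ 6 - C (315 / 16) * X ^ 4 + C (105 / 16) * X ^ 2 - C (5 / 16) := by
  refine Polynomial.funext fun x ↦ ?_
  simp [legendre_eq_sum, Finset.sum_range_succ, Nat.factorial, Nat.choose, Nat.descFactorial]
  ring

lemma X_pow_six_eq_sum_legendre : (X : ℝ[X]) ^ 6 =
    (1 / 7 : ℝ) • legendre 0 + (10 / 21 : ℝ) • legendre 2 + (24 / 77 : ℝ) • legendre 4 +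
      (16 / 231 : ℝ) • legendre 6 := by
  rw [legendre_zero, legendre_two, legendre_four, legendre_six]
  refine Polynomial.funext fun x ↦ ?_
  simp only [eval_add, eval_sub, eval_smul, eval_mul, eval_pow, eval_C, eval_X, eval_one,
    smul_eq_mul]
  ring

/-! ### Multiplier operators -/

lemma isUnit_leadingCoeff_sequence {K : Type*} [DivisionRing K] (S : Polynomial.Sequence K)
    (k : ℕ) : IsUnit (S k).leadingCoeff :=
  (leadingCoeff_ne_zero.2 (S.ne_zero k)).isUnit

/-- The linear operator sending the `k`-th polynomial of the simple set `S` to its `γ k`-fold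
multiple. -/
noncomputable def multiplierOperator {K : Type*} [Field K] (S : Polynomial.Sequence K)
    (γ : ℕ → K) : K[X] →ₗ[K] K[X] :=
  (S.basis (isUnit_leadingCoeff_sequence S)).constr K fun k ↦ γ k • S k

section MultiplierOperator

variable {K : Type*} [Field K] (S : Polynomial.Sequence K)

lemma multiplierOperator_apply_self (γ : ℕ → K) (k : ℕ) :
    multiplierOperator S γ (S k) = γ k • S k := by
  conv_lhs => rw [← S.basis_eq_self (isUnit_leadingCoeff_sequence S)]
  exact Module.Basis.constr_basis ..

lemma eq_multiplierOperator {γ : ℕ → K} {T : K[X] →ₗ[K] K[X]} (hT : ∀ k, T (S k) = γ k • S k) :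
    T = multiplierOperator S γ :=
  (S.basis (isUnit_leadingCoeff_sequence S)).ext fun k ↦ by
    rw [S.basis_eq_self, hT, multiplierOperator_apply_self]

lemma multiplierOperator_sum (γ a : ℕ → K) (n : ℕ) :
    multiplierOperator S γ (∑ k ∈ Finset.range n, C (a k) * S k) =
      ∑ k ∈ Finset.range n, C (γ k * a k) * S k := by
  rw [map_sum]
  refine Finset.sum_congr rfl fun k _ ↦ ?_
  rw [← smul_eq_C_mul, map_smul, multiplierOperator_apply_self, smul_smul, mul_comm,
    smul_eq_C_mul]

lemma exists_eq_sum_range_C_mul (p : K[X]) :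
    ∃ (n : ℕ) (a : ℕ → K), p = ∑ k ∈ Finset.range n, C (a k) * S k := by
  have hp : p ∈ Submodule.span K (S '' Finset.range (p.natDegree + 1)) := by
    rw [Finset.coe_range,
      S.span_degreeLT fun i _ ↦ isUnit_leadingCoeff_sequence S i, mem_degreeLT]
    exact degree_le_natDegree.trans_lt (by exact_mod_cast Nat.lt_succ_self _)
  obtain ⟨a, ha⟩ := (Submodule.mem_span_image_finset_iff_exists_fun' K).1 hp
  exact ⟨p.natDegree + 1, a, by simp only [← smul_eq_C_mul, ha]⟩

end MultiplierOperator

lemma isMultiplierSeqFor_iff (S : Polynomial.Sequence ℝ) (γ : ℕ → ℝ) :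
    IsMultiplierSeqFor S γ ↔ PreservesHyperbolicity (multiplierOperator S γ) := by
  refine ⟨fun h p hp ↦ ?_, fun h n a hp ↦ ?_⟩
  · obtain ⟨n, a, rfl⟩ := exists_eq_sum_range_C_mul S p
    exact multiplierOperator_sum S γ a n ▸ h n a hp
  · exact multiplierOperator_sum S γ a n ▸ h _ hp

lemma isLegendreMS_iff_legendreOperator (β : ℝ) :
    IsLegendreMS (fun k ↦ (k : ℝ) ^ 2 + k + β) ↔
      PreservesHyperbolicity (legendreOperator β) := by
  rw [eq_multiplierOperator legendreSequence (legendreOperator_legendre β)]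
  exact isMultiplierSeqFor_iff legendreSequence _

/-! ### Necessity of the conditions -/

lemma eq_one_of_isLegendreMS {α β : ℝ}
    (h : IsLegendreMS (fun k ↦ (k : ℝ) ^ 2 + α * k + β)) : α = 1 := by
  set T := multiplierOperator legendreSequence fun k ↦ (k : ℝ) ^ 2 + α * k + β
  have hT_legendre (k : ℕ) : T (legendre k) = ((k : ℝ) ^ 2 + α * k + β) • legendre k :=
    multiplierOperator_apply_self legendreSequence _ k
  have hhyp : Hyperbolic (T (X ^ 6)) :=
    (isMultiplierSeqFor_iff legendreSequence _).1 h _ (hyperbolic_iff_splits.2 (Splits.X_pow 6))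
  have himage : T (X ^ 6) = C (36 + 6 * α + β) * X ^ 6 +
      C (15 / 11 * (16 + 4 * α + β) - 15 / 11 * (36 + 6 * α + β)) * X ^ 4 +
      C (-40 / 77 * (α - 1)) * X ^ 2 + C (-32 / 231 * (α - 1)) := by
    conv_lhs => rw [X_pow_six_eq_sum_legendre]
    simp only [map_add, map_smul, hT_legendre]
    rw [legendre_zero, legendre_two, legendre_four, legendre_six]
    refine Polynomial.funext fun x ↦ ?_
    simp only [eval_add, eval_sub, eval_smul, eval_mul, eval_pow, eval_C, eval_X, eval_one,
      smul_eq_mul]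
    push_cast
    ring
  have hcoeff := hhyp.two_mul_coeff_zero_mul_coeff_two_le
  rw [himage] at hcoeff
  simp only [coeff_add, coeff_C_mul, coeff_X_pow, coeff_C] at hcoeff
  norm_num at hcoeff
  have hsq : (α - 1) ^ 2 ≤ 0 := by linarith
  exact sub_eq_zero.1 ((sq_nonpos_iff _).1 hsq)

lemma nonpos_of_forall_nsmul_le {M : Type*} [AddCommMonoid M] [LinearOrder M]
    [IsOrderedCancelAddMonoid M] [Archimedean M] {a b : M} (h : ∀ n : ℕ, n • a ≤ b) : a ≤ 0 := by
  by_contra! ha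
  obtain ⟨n, hn⟩ := exists_lt_nsmul ha b
  exact hn.not_ge (h n)

lemma legendreOperator_X_add_C_pow (β : ℝ) {n : ℕ} {N : ℝ} (hN : (n : ℝ) + 2 = N) (c : ℝ) :
    legendreOperator β ((X + C c) ^ (n + 2)) = (X + C c) ^ n * (C (N ^ 2 + N + β) * X ^ 2 +
      C (2 * ((N + β) * c)) * X + C (β * c ^ 2 - N * (N - 1))) := by
  subst hN
  refine Polynomial.funext fun x ↦ ?_
  simp only [legendreOperator_apply, derivative_X_add_C_pow, derivative_C_mul, eval_add, eval_sub,
    eval_mul, eval_pow, eval_C, eval_X, eval_one, eval_ofNat, Nat.add_succ_sub_one]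
  push_cast
  ring

namespace PreservesHyperbolicity

variable {β : ℝ} (h : PreservesHyperbolicity (legendreOperator β))
include h

lemma six_add_mul_two_add_mul_sq_nonneg (c : ℝ) : 0 ≤ (6 + β) * (2 + β * c ^ 2) := by
  have hquad := h ((X - C c) * (X + C c))
    (hyperbolic_iff_splits.2 ((Splits.X_sub_C c).mul (Splits.X_add_C c)))
  have himage : legendreOperator β ((X - C c) * (X + C c)) =
      C (6 + β) * X ^ 2 + C 0 * X + C (-(2 + β * c ^ 2)) := by
    refine Polynomial.funext fun x ↦ ?_
    simp only [legendreOperator_apply, derivative_mul, derivative_add, derivative_sub, derivative_X,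
      derivative_C, derivative_one, eval_add, eval_sub, eval_mul, eval_pow, eval_C, eval_X,
      eval_one, eval_zero, eval_ofNat, derivative_zero]
    ring
  have hdiscrim := (himage ▸ hquad).discrim_nonneg
  rw [discrim] at hdiscrim
  linarith

lemma ne_neg_six : β ≠ -6 := by
  rintro rfl
  have hcubic := h (X * ((X - C 2) * (X + C 2)))
    (hyperbolic_iff_splits.2 (Splits.X.mul ((Splits.X_sub_C 2).mul (Splits.X_add_C 2))))
  have himage : legendreOperator (-6) (X * ((X - C 2) * (X + C 2))) =
      X * (C 6 * X ^ 2 + C 0 * X + C 10) := by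
    refine Polynomial.funext fun x ↦ ?_
    simp only [legendreOperator_apply, derivative_mul, derivative_add, derivative_sub, derivative_X,
      derivative_C, derivative_one, eval_add, eval_sub, eval_mul, eval_pow, eval_C, eval_X,
      eval_one, eval_zero, eval_ofNat, derivative_zero]
    ring
  have hquad : Hyperbolic (C 6 * X ^ 2 + C 0 * X + C 10) := by
    refine hcubic.of_dvd (himage ▸ dvd_mul_left _ _) fun h0 ↦ ?_
    have heval := congrArg (eval 1) (himage.symm.trans h0)
    norm_num at heval
  have hdiscrim := hquad.discrim_nonneg
  norm_num [discrim] at hdiscrim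

lemma nonneg : 0 ≤ β := by
  by_contra! hβ
  have hsum : 0 < 6 + β := by
    have hge := h.six_add_mul_two_add_mul_sq_nonneg 0
    exact lt_of_le_of_ne (by linarith) fun h0 ↦ h.ne_neg_six (by linarith)
  have hval : 2 + β * (1 - 1 / β) ^ 2 = β + 1 / β := by
    field_simp [hβ.ne]
    ring
  have hnonneg := nonneg_of_mul_nonneg_right (h.six_add_mul_two_add_mul_sq_nonneg (1 - 1 / β)) hsum
  linarith [one_div_neg.2 hβ]

lemma sq_mul_le {n : ℕ} {N : ℝ} (hN : (n : ℝ) + 2 = N) (c : ℝ) :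
    c ^ 2 * (N * (N * (β - 1) - β)) ≤ (N ^ 2 + N + β) * (N * (N - 1)) := by
  have hβ := h.nonneg
  have hpow := h ((X + C c) ^ (n + 2)) (hyperbolic_iff_splits.2 ((Splits.X_add_C c).pow _))
  have himage := legendreOperator_X_add_C_pow β hN c
  have hlead : N ^ 2 + N + β ≠ 0 := by
    rw [← hN]
    positivity
  have hquad := hpow.of_dvd (himage ▸ dvd_mul_left _ _) <| by
    rw [himage]
    refine mul_ne_zero (pow_ne_zero _ (X_add_C_ne_zero c)) fun h0 ↦ hlead ?_
    have hcoeff := congrArg (coeff · 2) h0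
    simp only [coeff_add, coeff_C_mul, coeff_X_pow, coeff_X, coeff_C] at hcoeff
    norm_num at hcoeff
    exact hcoeff
  have hdiscrim := hquad.discrim_nonneg
  rw [discrim] at hdiscrim
  linarith

lemma le_one : β ≤ 1 := by
  refine sub_nonpos.1 (nonpos_of_forall_nsmul_le (b := 2 - β) fun n ↦ ?_)
  have hN : 0 < (n : ℝ) + 2 := by positivity
  have hnonpos : ((n : ℝ) + 2) * (((n : ℝ) + 2) * (β - 1) - β) ≤ 0 :=
    nonpos_of_forall_nsmul_le fun m ↦ by
      simpa only [Real.sq_sqrt m.cast_nonneg, nsmul_eq_mul] using h.sq_mul_le (n := n) rfl √m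
  have hle := nonpos_of_mul_nonpos_right hnonpos hN
  rw [nsmul_eq_mul]
  linarith

end PreservesHyperbolicity

lemma preservesHyperbolicity_legendreOperator_iff {β : ℝ} :
    PreservesHyperbolicity (legendreOperator β) ↔ 0 ≤ β ∧ β ≤ 1 :=
  ⟨fun h ↦ ⟨h.nonneg, h.le_one⟩, fun h ↦ preservesHyperbolicity_legendreOperator h.1 h.2⟩

theorem stmt_18 (α β : ℝ) :
    IsLegendreMS (fun k => (k : ℝ) ^ 2 + α * k + β) ↔
      (α = 1 ∧ 0 ≤ β ∧ β ≤ 1) := by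
  have hβ : IsLegendreMS (fun k => (k : ℝ) ^ 2 + 1 * k + β) ↔ 0 ≤ β ∧ β ≤ 1 := by
    simp only [one_mul]
    exact (isLegendreMS_iff_legendreOperator β).trans preservesHyperbolicity_legendreOperator_iff
  constructor
  · intro h
    obtain rfl : α = 1 := eq_one_of_isLegendreMS h
    exact ⟨rfl, hβ.1 h⟩
  · rintro ⟨rfl, h⟩
    exact hβ.2 h
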